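/- arXiv:1402.5735 — 4 statements merged into one kernel-verified Lean document; each statement's English description precedes it below -/
import Mathlib

section
/- Let A₁, A₂ be unital associative K-algebras with representations π₁ : A₁ → End_K(V₁), π₂ : A₂ → End_K(V₂) on K-vector spaces, and let D₁ ∈ End_K(V₁), D₂ ∈ End_K(V₂). Let φ : A₁ → A₂ be a unital K-algebra homomorphism and Φ : V₁ → V₂ a surjective K-linear map with Φ ∘ π₁(x) = π₂(φ(x)) ∘ Φ for all x ∈ A₁ and Φ ∘ D₁ = D₂ ∘ Φ. Then for every n ≥ 0 and every finite family of tuples (a_{t,0}, a_{t,1}, …, a_{t,n}) of elements of A₁: if Σ_t π₁(a_{t,0}) ∘ [D₁, π₁(a_{t,1})] ∘ ⋯ ∘ [D₁, π₁(a_{t,n})] = 0 in End_K(V₁), then Σ_t π₂(φ(a_{t,0})) ∘ [D₂, π₂(φ(a_{t,1}))] ∘ ⋯ ∘ [D₂, π₂(φ(a_{t,n}))] = 0 in End_K(V₂). (This is the well-definedness of the induced map Ψ : Ω_{D₁}^•(A₁) → Ω_{D₂}^•(A₂), making Connes' calculus a covariant functor.) -/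
/-!
Call `T₁ ∈ End V₁` and `T₂ ∈ End V₂` intertwined when `Φ (T₁ v) = T₂ (Φ v)` for all `v`. This
relation is closed under sums, differences and products, so the hypotheses on `π₁, π₂` and
`D₁, D₂` make the two sums in the theorem intertwined. If the first sum is zero, the second
vanishes on the range of `Φ`, which is all of `V₂`.
-/

/-- Intertwining passes from the factors to an ordered product. -/
theorem intertwine_prod_ofFn {K V₁ V₂ : Type*} [Field K]
    [AddCommGroup V₁] [Module K V₁] [AddCommGroup V₂] [Module K V₂] (Φ : V₁ →ₗ[K] V₂)
    (n : ℕ) (f : Fin n → Module.End K V₁) (g : Fin n → Module.End K V₂)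
    (h : ∀ i v, Φ (f i v) = g i (Φ v)) (v : V₁) :
    Φ ((List.ofFn f).prod v) = (List.ofFn g).prod (Φ v) := by
  induction n with
  | zero => simp
  | succ n ih =>
    simp only [List.ofFn_succ, List.prod_cons, Module.End.mul_apply]
    rw [h, ih _ _ fun i => h i.succ]

/-- **Statement 2.** -/
theorem connes_calculus_functorial
    (K : Type*) [Field K]
    (A₁ A₂ : Type*) [Ring A₁] [Algebra K A₁] [Ring A₂] [Algebra K A₂]
    (V₁ V₂ : Type*) [AddCommGroup V₁] [Module K V₁] [AddCommGroup V₂] [Module K V₂]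
    (π₁ : A₁ →ₐ[K] Module.End K V₁) (π₂ : A₂ →ₐ[K] Module.End K V₂)
    (D₁ : Module.End K V₁) (D₂ : Module.End K V₂)
    (φ : A₁ →ₐ[K] A₂) (Φ : V₁ →ₗ[K] V₂)
    (hsurj : Function.Surjective Φ)
    (hπ : ∀ x : A₁, Φ ∘ₗ (π₁ x : V₁ →ₗ[K] V₁) = (π₂ (φ x) : V₂ →ₗ[K] V₂) ∘ₗ Φ)
    (hD : Φ ∘ₗ (D₁ : V₁ →ₗ[K] V₁) = (D₂ : V₂ →ₗ[K] V₂) ∘ₗ Φ)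
    (n m : ℕ) (a : Fin m → Fin (n + 1) → A₁)
    (h0 : ∑ t : Fin m, π₁ (a t 0) *
        (List.ofFn fun i : Fin n =>
          D₁ * π₁ (a t i.succ) - π₁ (a t i.succ) * D₁).prod = 0) :
    ∑ t : Fin m, π₂ (φ (a t 0)) *
        (List.ofFn fun i : Fin n =>
          D₂ * π₂ (φ (a t i.succ)) - π₂ (φ (a t i.succ)) * D₂).prod = 0 := by
  have hπ_apply : ∀ x v, Φ (π₁ x v) = π₂ (φ x) (Φ v) := fun x v => LinearMap.congr_fun (hπ x) v
  have hD_apply : ∀ v, Φ (D₁ v) = D₂ (Φ v) := fun v => LinearMap.congr_fun hD v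
  ext w
  obtain ⟨v, rfl⟩ := hsurj w
  have h := congrArg Φ (LinearMap.congr_fun h0 v)
  simp only [LinearMap.sum_apply, map_sum, Module.End.mul_apply, LinearMap.zero_apply,
    map_zero, hπ_apply] at h ⊢
  rw [← h]
  refine Finset.sum_congr rfl fun t _ => ?_
  rw [intertwine_prod_ofFn Φ n _ _ fun i v => ?_]
  simp only [LinearMap.sub_apply, Module.End.mul_apply, map_sub, hπ_apply, hD_apply]
end

section
/- Let (A, V, D, γ) be an even algebraic spectral triple over a field K with char K ≠ 2, and assume γ = π(η) for some η ∈ A. Then for every a ∈ A, the operator [D ∘ D, π(a)] lies in π(dJ₀¹), i.e. there exists a finite family of pairs (x_t, y_t) of elements of A such that Σ_t π(x_t) ∘ [D, π(y_t)] = 0 and [D ∘ D, π(a)] = Σ_t [D, π(x_t)] ∘ [D, π(y_t)]. -/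
/-!
The identity `[D, γ] = 2Dγ` gives `D = -½ γ[D, γ]`, so `D` is itself a represented one-form.
Writing `[D, π a]` as the commutator of this one-form with `π a` yields a relation among
one-forms, whose differential turns out to be `[D², π a]` (up to sign). The resulting family is
`(-½, a)`, `(-½ η, ηa)`, `(½ aη, η)`. Everything reduces to
`[D, γ] = 2Dγ` and `[D, γ π(a)] = (D π(a) + π(a) D) γ`.
-/

/-- **Statement 6.** -/
theorem D_sq_commutator_mem_dJ
    (K A V : Type*) [Field K] [Ring A] [Algebra K A] [AddCommGroup V] [Module K V]
    (π : A →ₐ[K] Module.End K V) (D γ : Module.End K V)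
    (hγ2 : γ * γ = 1)
    (hγπ : ∀ a : A, γ * π a = π a * γ)
    (hγD : γ * D = -(D * γ))
    (η : A) (hη : π η = γ)
    (hchar : (2 : K) ≠ 0)
    (a : A) :
    ∃ (m : ℕ) (x y : Fin m → A),
      (∑ t : Fin m, π (x t) * (D * π (y t) - π (y t) * D)) = 0 ∧
      (D * D) * π a - π a * (D * D)
        = ∑ t : Fin m, (D * π (x t) - π (x t) * D) * (D * π (y t) - π (y t) * D) := by
  set P := π a with hP
  have hPγ : γ * P = P * γ := hγπ a
  have hDγ : D * γ - γ * D = (2 : K) • (D * γ) := by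
    rw [hγD, two_smul, sub_neg_eq_add]
  have hDPγ : D * (P * γ) - P * γ * D = (D * P + P * D) * γ := by
    rw [mul_assoc P γ D, hγD]; noncomm_ring
  -- Conjugation by `γ` negates the odd operators `D` and `DP + PD`.
  have h1 : γ * (D * γ) = -D := by
    rw [← mul_assoc, hγD, neg_mul, mul_assoc, hγ2, mul_one]
  have h2 : γ * ((D * P + P * D) * γ) = -(D * P + P * D) := by
    have h3 : γ * (D * P + P * D) = -((D * P + P * D) * γ) := by
      rw [mul_add, ← mul_assoc, hγD, ← mul_assoc, hPγ, mul_assoc P γ D, hγD, neg_mul,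
        mul_assoc D γ P, hPγ]
      noncomm_ring
    rw [← mul_assoc, h3, neg_mul, mul_assoc, hγ2, mul_one]
  obtain ⟨c, hc⟩ : ∃ c : K, c * 2 = 1 := ⟨2⁻¹, inv_mul_cancel₀ hchar⟩
  have hc' : ∀ X : Module.End K V, c • (2 : K) • X = X := fun X => by
    rw [smul_smul, hc, one_smul]
  refine ⟨3, ![(-c) • 1, (-c) • η, c • (a * η)], ![a, η * a, η], ?_, ?_⟩
  · simp only [Fin.sum_univ_three, Matrix.cons_val, map_smul, map_mul, map_one, hη, ← hP, hPγ,
      hDγ, hDPγ, smul_mul_assoc, one_mul, h2]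
    rw [mul_smul_comm, mul_assoc, h1, mul_neg]
    module
  · simp only [Fin.sum_univ_three, Matrix.cons_val, map_smul, map_mul, map_one, hη, ← hP, hPγ,
      smul_mul_assoc, mul_smul_comm, one_mul, mul_one, sub_self, zero_mul, zero_add,
      ← smul_sub, hDγ, hDPγ]
    rw [smul_comm 2 c, hc', neg_smul, hc', mul_assoc D γ, h2, mul_assoc _ γ, h1]
    noncomm_ring
end

section
/- Let (A, V, D, γ) be an even algebraic spectral triple over a field K with char K ≠ 2 such that γ lies in the image of π. Then for every n ≥ 2, π(dJ₀^n) = Σ_{i=0}^{n−1} π(Ω^i) · π(dJ₀^1) · π(Ω^{n−1−i}) as K-subspaces of End_K(V), where for subspaces X, Y ⊆ End_K(V), X·Y denotes the span of all composites x ∘ y with x ∈ X, y ∈ Y. -/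
/-!
Write `δ a = [D, π a]`. All `δ a` anticommute with `γ`, and `D * δ a + δ a * D = [D², π a]`.

If `∑ π(x) P = 0`, where each `P` is a product of `n` commutators, then
`∑ δ(x) P = -∑ π(x) (D P - (-1)ⁿ P D)`. By the graded Leibniz rule the right-hand side is a sum of
terms in which one factor `δ c` of `P` is replaced by `± [D², π c]`
(`mul_gradedComm_mem`). For `n = 1` this also shows that `π(dJ₀¹)` is contained in the span of
the operators `π(x) [D², π c]`.

The represented grading enters through the junk form attached to `γ δ(c) + δ(cγ) - c δ(γ) = 0`:
since `δ(γ) = 2Dγ`, its differential is `δ(γ)δ(c) - δ(c)δ(γ) = -2 [D², π c] γ`. As `c` is arbitrary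
and `γ² = 1`, every `[D², π c]` lies in `π(dJ₀¹)`, which finishes the inclusion `⊆`.

For `⊇`, the universal calculus is replaced by the space `formPairs k` of pairs `(π(ω), π(dω))`, so
that `T ∈ π(dJ₀ᵏ)` iff `(0, T)` is such a pair. It is closed under right multiplication by `A`
(with the graded Leibniz rule in the second component) and by commutators, so multiplying the
relation above by forms on both sides stays inside `π(dJ₀ⁿ)`.
-/


/-!
STATEMENT 9: For an even algebraic spectral triple with represented grading (char K ≠ 2),
for every `n ≥ 2`: `π(dJ₀^n) = Σ_{i=0}^{n-1} π(Ω^i)·π(dJ₀^1)·π(Ω^{n-1-i})`.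
-/

variable (K : Type*) [Field K]

section Defs

variable {A V : Type*} [Ring A] [Algebra K A] [AddCommGroup V] [Module K V]

/-- The ordered product `[D,π(c₀)]∘⋯∘[D,π(c_{k-1})]`. -/
def prodComm (π : A →ₐ[K] Module.End K V) (D : Module.End K V) {k : ℕ} (c : Fin k → A) :
    Module.End K V :=
  (List.ofFn fun s : Fin k => D * π (c s) - π (c s) * D).prod

/-- The subspace `π(Ω^k)` of `End_K(V)`. -/
def piOmega (π : A →ₐ[K] Module.End K V) (D : Module.End K V) (k : ℕ) :
    Submodule K (Module.End K V) :=
  Submodule.span K {T | ∃ (a : A) (c : Fin k → A), T = π a * prodComm K π D c}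

/-- The subspace `π(dJ₀^{k-1})` of `End_K(V)` (with `k` commutator factors);
`π(dJ₀^{-1}) := 0`. -/
def piDJ (π : A →ₐ[K] Module.End K V) (D : Module.End K V) : ℕ → Submodule K (Module.End K V)
  | 0 => ⊥
  | (k + 1) =>
    Submodule.span K
      {T | ∃ (m : ℕ) (x : Fin m → A) (c : Fin m → Fin k → A),
        (∑ t : Fin m, π (x t) * prodComm K π D (c t)) = 0 ∧
        T = ∑ t : Fin m, (D * π (x t) - π (x t) * D) * prodComm K π D (c t)}

end Defs

section Aux

variable {K}
variable {A V : Type*} [Ring A] [Algebra K A] [AddCommGroup V] [Module K V]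
variable (π : A →ₐ[K] Module.End K V) (D : Module.End K V)

/-- The commutator `[D, π(a)]`. -/
def dComm (a : A) : Module.End K V := D * π a - π a * D

/-- The operator `[D², π(a)]`. -/
def sqComm (a : A) : Module.End K V := D * D * π a - π a * (D * D)

/-- The space of pairs `(π(ω), π(dω))`, for `ω` a universal form of degree `k`. -/
def formPairs (k : ℕ) : Submodule K (Module.End K V × Module.End K V) :=
  Submodule.span K {p | ∃ (a : A) (c : Fin k → A),
    p = (π a * prodComm K π D c, dComm π D a * prodComm K π D c)}

lemma dComm_mul (a b : A) : dComm π D (a * b) = dComm π D a * π b + π a * dComm π D b := by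
  simp only [dComm, map_mul]; noncomm_ring

lemma prodComm_zero (c : Fin 0 → A) : prodComm K π D c = 1 := by
  simp [prodComm]

lemma prodComm_succ {k : ℕ} (c : Fin (k + 1) → A) :
    prodComm K π D c
      = prodComm K π D (fun i : Fin k => c i.castSucc) * dComm π D (c (Fin.last k)) := by
  simp only [prodComm, dComm, List.ofFn_succ_last, List.prod_append, List.prod_singleton]

lemma prodComm_snoc {k : ℕ} (c : Fin k → A) (b : A) :
    prodComm K π D (Fin.snoc c b : Fin (k + 1) → A) = prodComm K π D c * dComm π D b := by
  rw [prodComm_succ]; simp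

/-- Every pair is given by a single finite sum: the scalars can be absorbed into the leading
coefficients. -/
lemma exists_of_mem_formPairs {k : ℕ} {p : Module.End K V × Module.End K V}
    (hp : p ∈ formPairs π D k) :
    ∃ (m : ℕ) (x : Fin m → A) (c : Fin m → Fin k → A),
      p = (∑ t, π (x t) * prodComm K π D (c t), ∑ t, dComm π D (x t) * prodComm K π D (c t)) := by
  induction hp using Submodule.span_induction with
  | mem p h =>
    obtain ⟨a, c, rfl⟩ := h
    exact ⟨1, fun _ => a, fun _ => c, by simp⟩
  | zero => exact ⟨0, Fin.elim0, Fin.elim0, by simp; rfl⟩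
  | add p q _ _ hp hq =>
    obtain ⟨m, x, c, rfl⟩ := hp
    obtain ⟨m', x', c', rfl⟩ := hq
    exact ⟨m + m', Fin.append x x', Fin.append c c', by simp [Fin.sum_univ_add]⟩
  | smul r p _ hp =>
    obtain ⟨m, x, c, rfl⟩ := hp
    refine ⟨m, fun t => r • x t, c, ?_⟩
    simp [Finset.smul_sum, dComm, smul_sub, sub_mul]

lemma mem_piDJ_succ_iff {k : ℕ} {T : Module.End K V} :
    T ∈ piDJ K π D (k + 1) ↔ ((0, T) : Module.End K V × Module.End K V) ∈ formPairs π D k := by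
  constructor
  · intro h
    have hle : piDJ K π D (k + 1)
        ≤ (formPairs π D k).comap (LinearMap.inr K (Module.End K V) (Module.End K V)) := by
      refine Submodule.span_le.2 ?_
      rintro _ ⟨m, x, c, h0, rfl⟩
      have hs : (∑ t : Fin m, ((π (x t) * prodComm K π D (c t),
          dComm π D (x t) * prodComm K π D (c t)) : Module.End K V × Module.End K V))
          ∈ formPairs π D k :=
        Submodule.sum_mem _ fun t _ => Submodule.subset_span ⟨x t, c t, rfl⟩
      have he : (∑ t : Fin m, ((π (x t) * prodComm K π D (c t),
          dComm π D (x t) * prodComm K π D (c t)) : Module.End K V × Module.End K V))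
          = (0, ∑ t, dComm π D (x t) * prodComm K π D (c t)) :=
        Prod.ext (by simp [Prod.fst_sum, h0]) (by simp [Prod.snd_sum])
      rw [he] at hs
      exact hs
    exact hle h
  · intro h
    obtain ⟨m, x, c, h⟩ := exists_of_mem_formPairs π D h
    rw [Prod.mk.injEq] at h
    exact Submodule.subset_span ⟨m, x, c, h.1.symm, h.2⟩

lemma formPairs_mul_dComm {k : ℕ} {w w' : Module.End K V} (h : (w, w') ∈ formPairs π D k) (b : A) :
    (w * dComm π D b, w' * dComm π D b) ∈ formPairs π D (k + 1) := by
  have hle : formPairs π D k ≤ (formPairs π D (k + 1)).comap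
      ((LinearMap.mulRight K (dComm π D b)).prodMap (LinearMap.mulRight K (dComm π D b))) := by
    refine Submodule.span_le.2 ?_
    rintro _ ⟨a, c, rfl⟩
    refine Submodule.subset_span ⟨a, Fin.snoc c b, ?_⟩
    simp [prodComm_snoc, mul_assoc]
  exact hle h

lemma formPairs_mul_prodComm {j k : ℕ} {w w' : Module.End K V} (h : (w, w') ∈ formPairs π D k)
    (c : Fin j → A) :
    (w * prodComm K π D c, w' * prodComm K π D c) ∈ formPairs π D (k + j) := by
  induction j with
  | zero => simpa [prodComm_zero] using h
  | succ j ih =>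
    rw [prodComm_succ, ← mul_assoc, ← mul_assoc]
    exact formPairs_mul_dComm π D (ih _) _

/-- The Leibniz rule `d(ωb) = (dω)b + (-1)ᵏ ω db`, at the level of represented forms. -/
lemma formPairs_mul_right {k : ℕ} {w w' : Module.End K V} (h : (w, w') ∈ formPairs π D k) (b : A) :
    (w * π b, w' * π b + (-1 : K) ^ k • (w * dComm π D b)) ∈ formPairs π D k := by
  -- The map `(w, w') ↦ (w b, w' b + (-1)ᵏ w δ(b))`, packaged as a linear map.
  let f : ℕ → A → (Module.End K V × Module.End K V →ₗ[K] Module.End K V × Module.End K V) :=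
    fun k b => ((LinearMap.mulRight K (π b)).comp (LinearMap.fst K _ _)).prod
      ((LinearMap.mulRight K (π b)).comp (LinearMap.snd K _ _)
        + (-1 : K) ^ k • (LinearMap.mulRight K (dComm π D b)).comp (LinearMap.fst K _ _))
  have hf : ∀ (k : ℕ) (b : A), formPairs π D k ≤ (formPairs π D k).comap (f k b) := by
    intro k
    induction k with
    | zero =>
      intro b
      refine Submodule.span_le.2 ?_
      rintro _ ⟨a, c, rfl⟩
      refine Submodule.subset_span ⟨a * b, c, ?_⟩
      simp [f, prodComm_zero, dComm_mul]
    | succ k ih =>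
      intro b
      refine Submodule.span_le.2 ?_
      rintro _ ⟨a, c, rfl⟩
      -- `ω δ(e) b = ω δ(e b) - (ω e) δ(b)`, and the rule in degree `k` applies to `ω e`.
      set e := c (Fin.last k) with he
      set P := prodComm K π D (fun i : Fin k => c i.castSucc) with hP
      have h0 : (π a * P, dComm π D a * P) ∈ formPairs π D k :=
        Submodule.subset_span ⟨a, _, rfl⟩
      have h1 := formPairs_mul_dComm π D h0 (e * b)
      have h2 := formPairs_mul_dComm π D (ih e h0) b
      rw [SetLike.mem_coe, Submodule.mem_comap]
      convert Submodule.sub_mem _ h1 h2 using 1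
      rw [prodComm_succ, ← hP, ← he]
      ext1
      · simp [f, dComm_mul, mul_add, mul_assoc]
      · simp [f, dComm_mul, mul_add, add_mul, mul_assoc, pow_succ]
        abel
  exact hf k b h

/-- `ω [D², c]` is a junk form of degree one higher than `ω`: it comes from the relation
`ω (γ δ(c) + δ(cγ) - c δ(γ)) = 0`. -/
lemma mul_sqComm_mem {γ : Module.End K V}
    (hγ2 : γ * γ = 1) (hγπ : ∀ a : A, γ * π a = π a * γ) (hγD : γ * D = -(D * γ))
    (hrange : γ ∈ Set.range ⇑π) (hchar : (2 : K) ≠ 0)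
    {k : ℕ} {w w' : Module.End K V} (h : (w, w') ∈ formPairs π D k) (c : A) :
    ((0, w * sqComm π D c) : Module.End K V × Module.End K V) ∈ formPairs π D (k + 1) := by
  obtain ⟨g, hg⟩ := hrange
  have hδg : dComm π D g = (2 : K) • (D * γ) := by
    rw [dComm, hg, hγD, two_smul]; abel
  have anti : ∀ e, γ * dComm π D e = -(dComm π D e * γ) := by
    intro e
    rw [dComm, mul_sub, ← mul_assoc, hγD, ← mul_assoc, hγπ, mul_assoc, hγD, sub_mul, neg_mul,
      mul_assoc, hγπ]
    noncomm_ring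
  have rel : ∀ e, γ * dComm π D e + dComm π D (e * g) - π e * dComm π D g = 0 := by
    intro e
    rw [dComm_mul, hg, anti]; abel
  have drel : ∀ e, dComm π D g * dComm π D e - dComm π D e * dComm π D g
      = -((2 : K) • (sqComm π D e * γ)) := by
    intro e
    have h1 : sqComm π D e = D * dComm π D e + dComm π D e * D := by
      simp only [sqComm, dComm]; noncomm_ring
    rw [hδg, h1, smul_mul_assoc, mul_smul_comm, ← smul_sub, ← smul_neg, mul_assoc D γ, anti]
    congr 1
    noncomm_ring
  have key : ∀ e, ((0, (-1 : K) ^ k • (w * (-((2 : K) • (sqComm π D e * γ))))) :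
      Module.End K V × Module.End K V) ∈ formPairs π D (k + 1) := by
    intro e
    have h1 := formPairs_mul_dComm π D (formPairs_mul_right π D h g) e
    have h2 := formPairs_mul_dComm π D h (e * g)
    have h3 := formPairs_mul_dComm π D (formPairs_mul_right π D h e) g
    convert Submodule.sub_mem _ (Submodule.add_mem _ h1 h2) h3 using 1
    have hr := rel e
    ext1
    · have := congrArg (w * ·) hr
      simp only [mul_add, mul_sub, mul_zero] at this
      simp only [Prod.fst_add, Prod.fst_sub, hg, mul_assoc]
      exact this.symm
    · have := congrArg (w' * ·) hr
      simp only [mul_add, mul_sub, mul_zero] at this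
      simp only [Prod.snd_add, Prod.snd_sub, hg, ← drel, add_mul, smul_mul_assoc, mul_assoc,
        mul_sub, smul_sub]
      rw [← sub_eq_zero]
      rw [← neg_eq_zero] at this
      rw [← this]
      abel
  have hsq : sqComm π D (c * g) * γ = sqComm π D c := by
    have hDD : γ * (D * D) = D * D * γ := by
      rw [← mul_assoc, hγD, neg_mul, mul_assoc, hγD]; noncomm_ring
    rw [sqComm, sqComm, map_mul, hg, mul_assoc (π c), hDD, ← mul_assoc (D * D), ← mul_assoc (π c),
      ← sub_mul, mul_assoc, hγ2, mul_one]
  have hk := Submodule.smul_mem _ (-((-1 : K) ^ k * 2⁻¹)) (key (c * g))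
  convert hk using 1
  rw [hsq]
  ext1
  · simp
  · have h1 : (-1 : K) ^ k * (-1) ^ k = 1 := by rw [← mul_pow]; simp
    simp only [Prod.smul_mk, mul_neg, mul_smul_comm, smul_neg, neg_smul, smul_smul, Prod.neg_mk,
      neg_neg]
    rw [show (-1 : K) ^ k * 2⁻¹ * ((-1) ^ k * 2) = (-1 : K) ^ k * (-1) ^ k * (2⁻¹ * 2) by ring, h1,
      inv_mul_cancel₀ hchar, one_mul, one_smul]

lemma one_mem_formPairs : ((1, 0) : Module.End K V × Module.End K V) ∈ formPairs π D 0 :=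
  Submodule.subset_span ⟨1, Fin.elim0, by simp [prodComm_zero, dComm]⟩

lemma piOmega_mul_dComm {k : ℕ} {w : Module.End K V} (h : w ∈ piOmega K π D k) (b : A) :
    w * dComm π D b ∈ piOmega K π D (k + 1) := by
  have hle : piOmega K π D k
      ≤ (piOmega K π D (k + 1)).comap (LinearMap.mulRight K (dComm π D b)) := by
    refine Submodule.span_le.2 ?_
    rintro _ ⟨a, c, rfl⟩
    exact Submodule.subset_span ⟨a, Fin.snoc c b, by simp [prodComm_snoc, mul_assoc]⟩
  exact hle h

/-- The graded commutator of `D` with `P = δ(c₀)⋯δ(c_{k-1})`, multiplied by `π(a)` on the left: the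
Leibniz rule writes it as a sum of terms with one factor `δ(cᵢ)` replaced by `± [D², π(cᵢ)]`. -/
lemma mul_gradedComm_mem (hsq : ∀ c, sqComm π D c ∈ piDJ K π D 2) {k : ℕ} (a : A)
    (c : Fin k → A) :
    π a * (D * prodComm K π D c - (-1 : K) ^ k • (prodComm K π D c * D))
      ∈ ∑ i ∈ Finset.range k,
          piOmega K π D i * piDJ K π D 2 * piOmega K π D (k - 1 - i) := by
  induction k with
  | zero => simp [prodComm_zero]
  | succ k ih =>
    set P := prodComm K π D (fun i : Fin k => c i.castSucc) with hP
    set e := c (Fin.last k) with he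
    have hsplit : π a * (D * prodComm K π D c - (-1 : K) ^ (k + 1) • (prodComm K π D c * D))
        = π a * (D * P - (-1 : K) ^ k • (P * D)) * dComm π D e
          + (-1 : K) ^ k • (π a * P * sqComm π D e * 1) := by
      have h1 : sqComm π D e = D * dComm π D e + dComm π D e * D := by
        simp only [sqComm, dComm]; noncomm_ring
      rw [prodComm_succ, ← hP, ← he, h1]
      simp only [pow_succ, mul_neg, mul_one, neg_smul, sub_neg_eq_add, mul_add, mul_sub, sub_mul,
        smul_add, mul_smul_comm, smul_mul_assoc, mul_assoc]
      abel
    rw [hsplit]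
    refine Submodule.add_mem _ ?_ (Submodule.smul_mem _ _ ?_)
    · have hle : (∑ i ∈ Finset.range k,
          piOmega K π D i * piDJ K π D 2 * piOmega K π D (k - 1 - i))
          ≤ (∑ i ∈ Finset.range (k + 1),
            piOmega K π D i * piDJ K π D 2 * piOmega K π D (k + 1 - 1 - i)).comap
              (LinearMap.mulRight K (dComm π D e)) := by
        refine Finset.sum_induction _ (· ≤ _) (fun _ _ h h' => sup_le h h') bot_le ?_
        intro i hi
        have hik := Finset.mem_range.1 hi
        refine Submodule.mul_le.2 fun u hu v hv => ?_
        refine Finset.single_le_sum_of_canonicallyOrdered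
          (f := fun i => piOmega K π D i * piDJ K π D 2 * piOmega K π D (k + 1 - 1 - i))
          (Finset.mem_range.2 (hik.trans (Nat.lt_succ_self k))) ?_
        have hv' := piOmega_mul_dComm π D hv e
        rw [show k - 1 - i + 1 = k + 1 - 1 - i by omega] at hv'
        simpa [mul_assoc] using Submodule.mul_mem_mul hu hv'
      exact hle (ih _)
    · refine Finset.single_le_sum_of_canonicallyOrdered
          (f := fun i => piOmega K π D i * piDJ K π D 2 * piOmega K π D (k + 1 - 1 - i))
          (Finset.mem_range.2 (Nat.lt_succ_self k)) ?_
      refine Submodule.mul_mem_mul (Submodule.mul_mem_mul (Submodule.subset_span ⟨a, _, rfl⟩)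
        (hsq e)) ?_
      rw [show k + 1 - 1 - k = 0 by omega]
      exact Submodule.subset_span ⟨1, Fin.elim0, by simp [prodComm_zero]⟩

/-- On a vanishing sum `∑ π(x) P`, the sum `∑ δ(x) P` is minus the graded commutator part. -/
lemma sum_dComm_eq {k m : ℕ} (x : Fin m → A) (c : Fin m → Fin k → A)
    (h0 : ∑ t, π (x t) * prodComm K π D (c t) = 0) :
    ∑ t, dComm π D (x t) * prodComm K π D (c t)
      = -∑ t, π (x t) *
          (D * prodComm K π D (c t) - (-1 : K) ^ k • (prodComm K π D (c t) * D)) := by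
  have h : ∀ t, dComm π D (x t) * prodComm K π D (c t)
      = D * (π (x t) * prodComm K π D (c t))
        - (-1 : K) ^ k • ((π (x t) * prodComm K π D (c t)) * D)
        - π (x t) * (D * prodComm K π D (c t) - (-1 : K) ^ k • (prodComm K π D (c t) * D)) := by
    intro t
    simp only [dComm, mul_sub, sub_mul, mul_smul_comm, mul_assoc]
    abel
  simp only [h, Finset.sum_sub_distrib, ← Finset.mul_sum, ← Finset.sum_mul, ← Finset.smul_sum, h0]
  simp

/-- `π(dJ₀¹)` is contained in the span of the operators `π(x) [D², π(c)]`. -/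
lemma piDJ_two_le :
    piDJ K π D 2 ≤ Submodule.span K {T | ∃ x c : A, T = π x * sqComm π D c} := by
  refine Submodule.span_le.2 ?_
  rintro _ ⟨m, x, c, h0, rfl⟩
  have := sum_dComm_eq π D x c h0
  simp only [dComm] at this
  rw [this]
  refine Submodule.neg_mem _ (Submodule.sum_mem _ fun t _ => Submodule.subset_span
    ⟨x t, c t (Fin.last 0), ?_⟩)
  rw [prodComm_succ, prodComm_zero]
  simp only [sqComm, dComm, pow_one, neg_smul, one_smul]
  noncomm_ring

end Aux

/-- **Statement 9.** `π(dJ₀^n) = Σ_{i=0}^{n-1} π(Ω^i)·π(dJ₀^1)·π(Ω^{n-1-i})` for `n ≥ 2`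
(note `π(dJ₀^n)` has `n+1` commutator factors and `π(dJ₀^1)` has two; `X·Y` is the span of
composites, i.e. the product of submodules of the algebra `End_K(V)`). -/
theorem piDJ_eq_sum_mul
    (A V : Type*) [Ring A] [Algebra K A] [AddCommGroup V] [Module K V]
    (π : A →ₐ[K] Module.End K V) (D γ : Module.End K V)
    (hγ2 : γ * γ = 1) (hγπ : ∀ a : A, γ * π a = π a * γ) (hγD : γ * D = -(D * γ))
    (hrange : γ ∈ Set.range ⇑π) (hchar : (2 : K) ≠ 0)
    (n : ℕ) (hn : 2 ≤ n) :
    piDJ K π D (n + 1)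
      = ∑ i ∈ Finset.range n,
          piOmega K π D i * piDJ K π D 2 * piOmega K π D (n - 1 - i) := by
  have hmem : ∀ {k : ℕ} {w w' : Module.End K V}, (w, w') ∈ formPairs π D k → ∀ c : A,
      ((0, w * sqComm π D c) : Module.End K V × Module.End K V) ∈ formPairs π D (k + 1) :=
    fun h c => mul_sqComm_mem π D hγ2 hγπ hγD hrange hchar h c
  apply le_antisymm
  · have hsq : ∀ c, sqComm π D c ∈ piDJ K π D 2 := by
      intro c
      rw [mem_piDJ_succ_iff]
      simpa using hmem (one_mem_formPairs π D) c
    refine Submodule.span_le.2 ?_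
    rintro _ ⟨m, x, c, h0, rfl⟩
    have := sum_dComm_eq π D x c h0
    simp only [dComm] at this
    rw [this]
    exact Submodule.neg_mem _
      (Submodule.sum_mem _ fun t _ => mul_gradedComm_mem π D hsq (x t) (c t))
  · refine Finset.sum_induction _ (· ≤ piDJ K π D (n + 1)) (fun _ _ h h' => sup_le h h') bot_le ?_
    intro i hi
    have hin := Finset.mem_range.1 hi
    refine (mul_le_mul' (mul_le_mul' le_rfl (piDJ_two_le π D)) le_rfl).trans ?_
    rw [piOmega, piOmega, Submodule.span_mul_span, Submodule.span_mul_span]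
    refine Submodule.span_le.2 ?_
    rintro _ ⟨_, ⟨_, ⟨a, c, rfl⟩, _, ⟨x, e, rfl⟩, rfl⟩, _, ⟨b, d, rfl⟩, rfl⟩
    have h1 : (π a * prodComm K π D c, dComm π D a * prodComm K π D c) ∈ formPairs π D i :=
      Submodule.subset_span ⟨a, c, rfl⟩
    have h2 := hmem (formPairs_mul_right π D h1 x) e
    have h3 := formPairs_mul_prodComm π D (formPairs_mul_right π D h2 b) d
    rw [show i + 1 + (n - 1 - i) = n by omega] at h3
    rw [SetLike.mem_coe, mem_piDJ_succ_iff]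
    simpa [mul_assoc] using h3
end

section
/- Let V be a vector space over a field K and D ∈ End_K(V) with D ∘ D = 0. Then for every m ≥ 0 and every finite family of tuples (x_{t,0}, x_{t,1}, …, x_{t,m}) of elements of End_K(V): if Σ_t x_{t,0} ∘ [D, x_{t,1}] ∘ ⋯ ∘ [D, x_{t,m}] = 0, then Σ_t [D, x_{t,0}] ∘ [D, x_{t,1}] ∘ ⋯ ∘ [D, x_{t,m}] = 0. (Equivalently, π(dJ₀^m) = {0} for every m whenever D² = 0; this is the key step in computing Ω_D^•(C^∞(M)~) for the triple built from the de Rham differential, which squares to zero.) -/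
/-!
Since `D² = 0`, each commutator `[D, y] = Dy - yD` anticommutes with `D`: `D[D, y] = -DyD = -[D, y]D`.
Hence a product `P` of `m` commutators satisfies `D P = (-1)^m P D`, and so
`[D, x₀] P = D (x₀ P) - (-1)^m (x₀ P) D`. The right-hand side is additive in `x₀ P`, so summing over
the family expresses the second sum through the first, which vanishes.
-/

/-- `D` commutes up to the sign `(-1)^m` with a product of `m` commutators `[D, y i]`. -/
lemma mul_prod_commutators {R : Type*} [Ring R] {D : R} (hD : D * D = 0) :
    ∀ (m : ℕ) (y : Fin m → R),
      D * (List.ofFn fun i => D * y i - y i * D).prod =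
        (-1) ^ m * ((List.ofFn fun i => D * y i - y i * D).prod * D) := by
  intro m
  induction m with
  | zero => intro y; simp
  | succ m ih =>
    intro y
    have anti : D * (D * y 0 - y 0 * D) = -((D * y 0 - y 0 * D) * D) := by
      rw [mul_sub, sub_mul, ← mul_assoc, hD, mul_assoc (y 0), hD]
      simp [mul_assoc]
    have sign (a : R) : a * (-1) ^ m = (-1) ^ m * a :=
      ((Commute.neg_one_right a).pow_right m).eq
    rw [List.ofFn_succ, List.prod_cons, ← mul_assoc, anti, neg_mul, mul_assoc,
      ih fun i => y i.succ, ← mul_assoc, sign, pow_succ]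
    simp [mul_assoc]

/-- **Statement 10.** -/
theorem dJ_vanishes_of_D_sq_zero
    (K V : Type*) [Field K] [AddCommGroup V] [Module K V]
    (D : Module.End K V) (hD : D * D = 0) :
    ∀ (m k : ℕ) (x : Fin k → Fin (m + 1) → Module.End K V),
      (∑ t : Fin k, x t 0 *
          (List.ofFn fun i : Fin m => D * x t i.succ - x t i.succ * D).prod) = 0 →
      (∑ t : Fin k,
          (List.ofFn fun i : Fin (m + 1) => D * x t i - x t i * D).prod) = 0 := by
  intro m k x h
  have key (t : Fin k) :
      (List.ofFn fun i : Fin (m + 1) => D * x t i - x t i * D).prod =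
        D * (x t 0 * (List.ofFn fun i : Fin m => D * x t i.succ - x t i.succ * D).prod) -
        (-1) ^ m *
          ((x t 0 * (List.ofFn fun i : Fin m => D * x t i.succ - x t i.succ * D).prod) * D) := by
    have sign : x t 0 * (-1) ^ m = (-1) ^ m * x t 0 :=
      ((Commute.neg_one_right (x t 0)).pow_right m).eq
    rw [List.ofFn_succ, List.prod_cons, sub_mul, mul_assoc (x t 0) D,
      mul_prod_commutators hD m fun i => x t i.succ, ← mul_assoc (x t 0), sign]
    simp only [mul_assoc]
  simp only [key, Finset.sum_sub_distrib, ← Finset.mul_sum, ← Finset.sum_mul, h]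
  simp
end
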